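/- Let Γ = (V,E) be a simple finite connected graph, q : V → ℝ a potential, and H(Γ) = Q − C the discrete Schrödinger operator, where Q = diag(q) and C is the adjacency matrix of Γ. Let β = |E| − |V| + 1, fix a spanning tree of Γ, and let S = {e_1, …, e_β} be the edges not in the tree, with e_j = (u_j, v_j). Suppose f is an eigenvector of H(Γ) corresponding to a simple eigenvalue λ_n(H(Γ)) (the n-th smallest) and f is nonzero at every vertex. Let φ be the number of edges (u,v) ∈ E with f_u f_v < 0, set γ̃_j = f_{v_j}/f_{u_j}, and let p = #{j : γ̃_j < 0}. For γ = (γ_1,…,γ_β) with all γ_j nonzero, let H(Γ^cut_γ) be the matrix obtained from H(Γ) by, for each j, setting the (u_j,v_j) and (v_j,u_j) entries to 0 and replacing the diagonal entries q_{u_j}, q_{v_j} by q_{u_j} − γ_j and q_{v_j} − 1/γ_j. Then (γ̃_1,…,γ̃_β) is a critical point of the function γ ↦ λ_{φ−p+1}(H(Γ^cut_γ)) and its Morse index (the number of negative eigenvalues of the Hessian of this function at (γ̃_1,…,γ̃_β)) equals n − 1 + β − φ. -/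

import Mathlib

open Matrix

/-- The eigenvalues of a Hermitian matrix, sorted in increasing order and counted with
multiplicity (junk value `0` if the matrix is not Hermitian); `sE M i` is the `i`-th sorted
eigenvalue, 0-based, with junk value `0` out of range. -/
noncomputable def sortedEigs {𝕜 : Type*} [RCLike 𝕜] {d : ℕ} (M : Matrix (Fin d) (Fin d) 𝕜) :
    Fin d → ℝ :=
  if h : M.IsHermitian then h.eigenvalues ∘ Tuple.sort h.eigenvalues else 0

noncomputable def sE {𝕜 : Type*} [RCLike 𝕜] {d : ℕ} (M : Matrix (Fin d) (Fin d) 𝕜)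
    (i : ℕ) : ℝ :=
  if h : i < d then sortedEigs M ⟨i, h⟩ else 0

/-- The discrete Schrödinger operator `H(Γ) = Q - C` of a graph `G` with potential `q`. -/
noncomputable def schrodOp {N : ℕ} (G : SimpleGraph (Fin N)) [DecidableRel G.Adj]
    (q : Fin N → ℝ) : Matrix (Fin N) (Fin N) ℝ :=
  Matrix.diagonal q - G.adjMatrix ℝ

/-- The cut operator `H(Γ^cut_γ)`: for each `j`, the matrix entries at `(uE j, vE j)` and
`(vE j, uE j)` (equal to `-1` in `H(Γ)`) are replaced by `0` and the diagonal entries at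
`uE j`, `vE j` are decreased by `γ j` and `(γ j)⁻¹` respectively. -/
noncomputable def schrodCut {N β : ℕ} (G : SimpleGraph (Fin N)) [DecidableRel G.Adj]
    (q : Fin N → ℝ) (uE vE : Fin β → Fin N) (γ : Fin β → ℝ) :
    Matrix (Fin N) (Fin N) ℝ :=
  schrodOp G q - ∑ j : Fin β, Matrix.of (fun a b =>
    if a = uE j ∧ b = uE j then γ j
    else if a = vE j ∧ b = vE j then (γ j)⁻¹
    else if (a = uE j ∧ b = vE j) ∨ (a = vE j ∧ b = uE j) then -1
    else 0)

/-- The magnetic operator `H(Γ^α_mag)`: the entries of `H(Γ)` at `(uE j, vE j)` and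
`(vE j, uE j)` (equal to `-1`) are replaced by `-exp(i α j)` and `-exp(-i α j)`. -/
noncomputable def schrodMag {N β : ℕ} (G : SimpleGraph (Fin N)) [DecidableRel G.Adj]
    (q : Fin N → ℝ) (uE vE : Fin β → Fin N) (α : Fin β → ℝ) :
    Matrix (Fin N) (Fin N) ℂ :=
  (schrodOp G q).map (fun x => (x : ℂ)) + ∑ j : Fin β, Matrix.of (fun a b =>
    if a = uE j ∧ b = vE j then 1 - Complex.exp (Complex.I * (α j : ℝ))
    else if a = vE j ∧ b = uE j then 1 - Complex.exp (-(Complex.I * (α j : ℝ)))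
    else 0)

/-- The number of sign changes ("zeros") of a vertex function `f`: the number of edges of `G`
at whose endpoints `f` has different signs. -/
noncomputable def signChanges {N : ℕ} (G : SimpleGraph (Fin N)) (f : Fin N → ℝ) : ℕ :=
  {e : Sym2 (Fin N) | e ∈ G.edgeSet ∧ ∀ u v : Fin N, e = s(u, v) → f u * f v < 0}.ncard

/-- The Hessian matrix of second partial derivatives of `f : ℝ^k → ℝ` at `x₀`, and the number
of its negative eigenvalues (the Morse index of a critical point). -/
noncomputable def hessMat {k : ℕ} (f : (Fin k → ℝ) → ℝ) (x₀ : Fin k → ℝ) :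
    Matrix (Fin k) (Fin k) ℝ :=
  Matrix.of fun i j => fderiv ℝ (fun x => fderiv ℝ f x (Pi.single j 1)) x₀ (Pi.single i 1)

noncomputable def negEigCount {k : ℕ} (M : Matrix (Fin k) (Fin k) ℝ) : ℕ :=
  {i : Fin k | sortedEigs M i < 0}.ncard

/-!
For `γ` without zero entry, `H(Γ^cut_γ) = H(Γ) - ∑ j, (γ j)⁻¹ b_j ⊗ b_j` with
`b_j x = γ j * x (u j) - x (v j)`. At `γ̃` every `b_j` vanishes on `f`, so `f` is also an
eigenvector of `H(Γ^cut_γ̃)` with the same eigenvalue `λ`. The cut graph is a tree, and the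
ground state representation writes the form of `H(Γ^cut_γ̃) - λ` as a combination of squares of the
increments of `y / f` along its edges: `λ` is simple, and the number of eigenvalues below it
is the number `φ - p` of sign changes of `f` on the tree. The eigenvalue and its eigenvector
`x γ` are therefore smooth near `γ̃`, and the first derivative of the eigenvalue vanishes
because `b_j f = 0`.

Differentiating the eigenvalue equation to second order and completing squares, the
substitution `(y, t) ↦ (y + Y t, (t j * f (u j) + b_j (y + Y t))_j)`, where `Y` is the
derivative of `x`, turns the form of `H(Γ^cut_γ̃) - λ` plus a positive multiple of the Hessian
into the form of `H(Γ) - λ` plus the diagonal form with entries `-(γ̃ j)⁻¹`. By Sylvester's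
law of inertia `(φ - p) + index = (n - 1) + #{j | 0 < γ̃ j} = (n - 1) + (β - p)`.
-/

open QuadraticMap Filter Topology

section QuadraticForms

lemma equivalent_of_injective {K V W : Type*} [Field K] [AddCommGroup V] [Module K V]
    [AddCommGroup W] [Module K W] [FiniteDimensional K W] {Q : QuadraticForm K V}
    {Q' : QuadraticForm K W} (L : V →ₗ[K] W) (hL : Function.Injective L)
    (hdim : Module.finrank K V = Module.finrank K W) (hQ : ∀ x, Q' (L x) = Q x) :
    Q.Equivalent Q' :=
  ⟨{ LinearEquiv.ofInjectiveOfFinrankEq L hL hdim with map_app' := hQ }⟩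

lemma sigNeg_prod {K V W : Type*} [Field K] [LinearOrder K] [IsStrictOrderedRing K]
    [AddCommGroup V] [Module K V] [FiniteDimensional K V]
    [AddCommGroup W] [Module K W] [FiniteDimensional K W]
    (Q : QuadraticForm K V) (Q' : QuadraticForm K W) :
    sigNeg (Q.prod Q') = sigNeg Q + sigNeg Q' := by
  have : Invertible (2 : K) := invertibleOfNonzero two_ne_zero
  obtain ⟨w, hw⟩ := Q.equivalent_weightedSumSquares
  obtain ⟨w', hw'⟩ := Q'.equivalent_weightedSumSquares
  have hsum : (weightedSumSquares K (Sum.elim w w')).Equivalent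
      ((weightedSumSquares K w).prod (weightedSumSquares K w')) :=
    ⟨{ LinearEquiv.sumArrowLequivProdArrow _ _ K K with
        map_app' := fun x => by
          simp [weightedSumSquares_apply, QuadraticMap.prod_apply,
            LinearEquiv.sumArrowLequivProdArrow] }⟩
  rw [((hw.prod hw').trans hsum.symm).sigNeg_eq, hw.sigNeg_eq, hw'.sigNeg_eq,
    QuadraticForm.sigNeg_weightedSumSquares, QuadraticForm.sigNeg_weightedSumSquares,
    QuadraticForm.sigNeg_weightedSumSquares]
  have hset : {i | Sum.elim w w' i < 0} = Sum.inl '' {i | w i < 0} ∪ Sum.inr '' {i | w' i < 0} := by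
    ext (i | i) <;> simp
  rw [hset, Set.ncard_union_eq (by simp [Set.disjoint_left]),
    Set.ncard_image_of_injective _ Sum.inl_injective,
    Set.ncard_image_of_injective _ Sum.inr_injective]

lemma sigNeg_smul_of_pos {V : Type*} [AddCommGroup V] [Module ℝ V] (Q : QuadraticForm ℝ V)
    {c : ℝ} (hc : 0 < c) : sigNeg (c • Q) = sigNeg Q := by
  have hs : IsUnit (√c) := (Real.sqrt_pos.2 hc).ne'.isUnit
  have h : (c • Q).Equivalent Q :=
    ⟨{ LinearEquiv.smulOfUnit hs.unit with
        map_app' := fun x => by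
          change Q (√c • x) = c • Q x
          rw [QuadraticMap.map_smul, Real.mul_self_sqrt hc.le] }⟩
  exact h.sigNeg_eq

variable {n : Type*} [Fintype n] [DecidableEq n]

lemma toQuadraticForm'_apply (M : Matrix n n ℝ) (x : n → ℝ) :
    M.toQuadraticForm' x = x ⬝ᵥ M *ᵥ x := by
  simp [Matrix.toQuadraticForm', Matrix.toLinearMap₂'_apply']

lemma eventually_sigPos_toQuadraticForm'_le {X : Type*} [TopologicalSpace X]
    {A : X → Matrix n n ℝ} {x₀ : X} (hA : ContinuousAt A x₀) :
    ∀ᶠ x in 𝓝 x₀, sigPos (A x₀).toQuadraticForm' ≤ sigPos (A x).toQuadraticForm' := by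
  obtain ⟨V, hVdim, hV⟩ := exists_finrank_eq_sigPos_and_posDef (A x₀).toQuadraticForm'
  have hcompact : IsCompact ((V : Set (n → ℝ)) ∩ Metric.sphere 0 1) :=
    (isCompact_sphere 0 1).inter_left V.closed_of_finiteDimensional
  have hpos : ∀ᶠ x in 𝓝 x₀, ∀ y ∈ (V : Set (n → ℝ)) ∩ Metric.sphere 0 1,
      0 < y ⬝ᵥ A x *ᵥ y := by
    refine hcompact.eventually_forall_of_forall_eventually fun y hy => ?_
    have hy0 : 0 < y ⬝ᵥ A x₀ *ᵥ y := by
      rw [← toQuadraticForm'_apply]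
      exact hV ⟨y, hy.1⟩ fun h => Metric.ne_of_mem_sphere hy.2 one_ne_zero congr(($h : n → ℝ))
    have hcont : ContinuousAt (fun z : X × (n → ℝ) => z.2 ⬝ᵥ A z.1 *ᵥ z.2) (x₀, y) := by
      have hB : Continuous fun p : Matrix n n ℝ × (n → ℝ) => p.2 ⬝ᵥ p.1 *ᵥ p.2 := by fun_prop
      exact hB.continuousAt.comp (f := fun z : X × (n → ℝ) => (A z.1, z.2))
        ((hA.comp continuousAt_fst).prodMk continuousAt_snd)
    exact hcont.eventually_const_lt hy0
  filter_upwards [hpos] with x hx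
  rw [← hVdim]
  refine le_sigPos_of_posDef _ fun y hy => ?_
  have hnorm : 0 < ‖(y : n → ℝ)‖ := norm_pos_iff.2 (by simpa using hy)
  have hunit := hx (‖(y : n → ℝ)‖⁻¹ • y)
    ⟨V.smul_mem _ y.2, by simp [norm_smul, hnorm.ne']⟩
  rw [← toQuadraticForm'_apply, QuadraticMap.map_smul] at hunit
  exact pos_of_mul_pos_right hunit (by positivity)

lemma eventually_sigNeg_toQuadraticForm'_le {X : Type*} [TopologicalSpace X]
    {A : X → Matrix n n ℝ} {x₀ : X} (hA : ContinuousAt A x₀) :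
    ∀ᶠ x in 𝓝 x₀, sigNeg (A x₀).toQuadraticForm' ≤ sigNeg (A x).toQuadraticForm' := by
  have hneg (M : Matrix n n ℝ) : (-M).toQuadraticForm' = -M.toQuadraticForm' := by
    simp [Matrix.toQuadraticForm', LinearMap.BilinMap.toQuadraticMap_neg]
  simpa only [Pi.neg_apply, hneg, sigPos_neg] using
    eventually_sigPos_toQuadraticForm'_le (A := -A) hA.neg

end QuadraticForms

section ShiftedForm

variable {n : Type*} [Fintype n] [DecidableEq n]

/-- The quadratic form `x ↦ ⟨x, M x⟩ - c ⟨x, x⟩`. For symmetric `M` its negative index counts the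
eigenvalues of `M` below `c`, and its radical is the eigenspace of `M` at `c`. -/
noncomputable def shiftedForm (M : Matrix n n ℝ) (c : ℝ) : QuadraticForm ℝ (n → ℝ) :=
  (M - c • (1 : Matrix n n ℝ)).toQuadraticForm'

lemma shiftedForm_apply (M : Matrix n n ℝ) (c : ℝ) (x : n → ℝ) :
    shiftedForm M c x = x ⬝ᵥ M *ᵥ x - c * (x ⬝ᵥ x) := by
  simp [shiftedForm, toQuadraticForm'_apply, sub_mulVec, smul_mulVec, dotProduct_sub]

lemma shiftedForm_equivalent_weightedSumSquares {M : Matrix n n ℝ} (hM : M.IsHermitian) (c : ℝ) :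
    (shiftedForm M c).Equivalent (weightedSumSquares ℝ fun i => hM.eigenvalues i - c) := by
  set U : Matrix n n ℝ := (hM.eigenvectorUnitary : Matrix n n ℝ)
  have hUU : U * Uᵀ = 1 := Unitary.coe_mul_star_self hM.eigenvectorUnitary
  have hspec : M = U * diagonal hM.eigenvalues * Uᵀ := by
    conv_lhs => rw [hM.spectral_theorem]
    rfl
  have hdot (x y : n → ℝ) : x ⬝ᵥ U *ᵥ y = (Uᵀ *ᵥ x) ⬝ᵥ y := by
    rw [dotProduct_mulVec, mulVec_transpose]
  have hsq (x : n → ℝ) : x ⬝ᵥ x = (Uᵀ *ᵥ x) ⬝ᵥ (Uᵀ *ᵥ x) := by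
    rw [← hdot, mulVec_mulVec, hUU, one_mulVec]
  have hquad (x : n → ℝ) :
      x ⬝ᵥ M *ᵥ x = (Uᵀ *ᵥ x) ⬝ᵥ diagonal hM.eigenvalues *ᵥ (Uᵀ *ᵥ x) := by
    rw [← hdot, mulVec_mulVec, mulVec_mulVec, ← hspec]
  refine equivalent_of_injective Uᵀ.mulVecLin (fun x y hxy => ?_) rfl fun x => ?_
  · simpa only [mulVecLin_apply, mulVec_mulVec, hUU, one_mulVec] using congrArg (U *ᵥ ·) hxy
  · rw [shiftedForm_apply, hquad, hsq]
    simp only [weightedSumSquares_apply, smul_eq_mul, mulVecLin_apply, mulVec_diagonal, dotProduct,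
      Finset.mul_sum, ← Finset.sum_sub_distrib]
    exact Finset.sum_congr rfl fun i _ => by ring

omit [DecidableEq n] in
lemma dotProduct_mulVec_comm {M : Matrix n n ℝ} (hM : M.IsHermitian) (x y : n → ℝ) :
    x ⬝ᵥ M *ᵥ y = y ⬝ᵥ M *ᵥ x := by
  rw [← dotProduct_transpose_mulVec, ← conjTranspose_eq_transpose_of_trivial, hM]

lemma polar_shiftedForm {M : Matrix n n ℝ} (hM : M.IsHermitian) (c : ℝ) (x y : n → ℝ) :
    polar (shiftedForm M c) x y = 2 * (x ⬝ᵥ M *ᵥ y - c * (x ⬝ᵥ y)) := by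
  simp only [polar, shiftedForm_apply, mulVec_add, dotProduct_add, add_dotProduct,
    dotProduct_mulVec_comm hM y x, dotProduct_comm y x]
  ring

lemma radical_shiftedForm {M : Matrix n n ℝ} (hM : M.IsHermitian) (c : ℝ) :
    (shiftedForm M c).radical = Module.End.eigenspace (Matrix.toLin' M) c := by
  have : Invertible (2 : ℝ) := invertibleOfNonzero two_ne_zero
  have hpolar (x y : n → ℝ) :
      (shiftedForm M c).polarBilin x y = 2 * (y ⬝ᵥ (M *ᵥ x - c • x)) := by
    rw [polarBilin_apply_apply, polar_comm, polar_shiftedForm hM, dotProduct_sub, dotProduct_smul,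
      smul_eq_mul]
  ext x
  rw [radical_eq_ker_polarBilin, LinearMap.mem_ker, Module.End.mem_eigenspace_iff, toLin'_apply,
    ← sub_eq_zero (a := M *ᵥ x)]
  constructor
  · intro h
    refine dotProduct_self_eq_zero.1 ?_
    simpa [h] using (hpolar x (M *ᵥ x - c • x)).symm
  · intro h
    refine LinearMap.ext fun y => ?_
    rw [hpolar, h, dotProduct_zero, mul_zero, LinearMap.zero_apply]

lemma sigNeg_shiftedForm {M : Matrix n n ℝ} (hM : M.IsHermitian) (c : ℝ) :
    sigNeg (shiftedForm M c) = {i | hM.eigenvalues i < c}.ncard := by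
  simp only [QuadraticForm.sigNeg_of_equiv_weightedSumSquares
    (shiftedForm_equivalent_weightedSumSquares hM c), sub_neg]

lemma finrank_eigenspace_toLin' {M : Matrix n n ℝ} (hM : M.IsHermitian) (c : ℝ) :
    Module.finrank ℝ (Module.End.eigenspace (Matrix.toLin' M) c) =
      {i | hM.eigenvalues i = c}.ncard := by
  rw [← radical_shiftedForm hM, QuadraticForm.finrank_radical_of_equiv_weightedSumSquares
    (shiftedForm_equivalent_weightedSumSquares hM c)]
  simp only [sub_eq_zero]

lemma sigPos_add_sigNeg_shiftedForm {M : Matrix n n ℝ} (hM : M.IsHermitian) (c : ℝ) :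
    sigPos (shiftedForm M c) + sigNeg (shiftedForm M c) +
      Module.finrank ℝ (Module.End.eigenspace (Matrix.toLin' M) c) = Fintype.card n := by
  rw [← radical_shiftedForm hM, QuadraticForm.sigPos_add_sigNeg_add_radical,
    Module.finrank_fintype_fun_eq_card]

end ShiftedForm

section SortedEigenvalues

variable {d : ℕ} {M : Matrix (Fin d) (Fin d) ℝ}

lemma sortedEigs_eq (hM : M.IsHermitian) :
    sortedEigs M = hM.eigenvalues ∘ Tuple.sort hM.eigenvalues := dif_pos hM

lemma monotone_sortedEigs (hM : M.IsHermitian) : Monotone (sortedEigs M) :=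
  sortedEigs_eq hM ▸ Tuple.monotone_sort _

lemma ncard_sortedEigs (hM : M.IsHermitian) (P : ℝ → Prop) :
    {i | P (sortedEigs M i)}.ncard = {i | P (hM.eigenvalues i)}.ncard := by
  rw [sortedEigs_eq hM]
  exact Set.ncard_preimage_of_injective_subset_range (s := {i | P (hM.eigenvalues i)})
    (Equiv.injective _) (by simp)

lemma apply_lt_iff_val_lt_ncard {α : Type*} [LinearOrder α] {a : Fin d → α} (ha : Monotone a)
    (c : α) (i : Fin d) : a i < c ↔ (i : ℕ) < {j | a j < c}.ncard := by
  have hcard (k : Fin d) : (Set.Iio k).ncard = k := by simp [Set.ncard_eq_toFinset_card']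
  constructor
  · intro h
    calc (i : ℕ) < (Set.Iic i).ncard := by simp [Set.ncard_eq_toFinset_card']
      _ ≤ _ := Set.ncard_le_ncard fun j hj => (ha hj).trans_lt h
  · contrapose!
    intro h
    calc _ ≤ (Set.Iio i).ncard :=
          Set.ncard_le_ncard fun j hj => lt_of_not_ge fun hij => (h.trans (ha hij)).not_gt hj
      _ = i := hcard i

lemma sE_sigNeg_shiftedForm (hM : M.IsHermitian) {c : ℝ}
    (hc : Module.End.HasEigenvalue (Matrix.toLin' M) c) : sE M (sigNeg (shiftedForm M c)) = c := by
  have hmem : ∃ i, sortedEigs M i = c := by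
    have hpos : 0 < {i | sortedEigs M i = c}.ncard := by
      rw [ncard_sortedEigs hM (· = c), ← finrank_eigenspace_toLin' hM]
      exact Submodule.one_le_finrank_iff.2 hc
    exact Set.nonempty_of_ncard_ne_zero hpos.ne'
  obtain ⟨i, rfl⟩ := hmem
  rw [sigNeg_shiftedForm hM, ← ncard_sortedEigs hM (· < sortedEigs M i)]
  set m := {j | sortedEigs M j < sortedEigs M i}.ncard
  have hlt := apply_lt_iff_val_lt_ncard (monotone_sortedEigs hM) (sortedEigs M i)
  have hmi : m ≤ i := not_lt.1 ((hlt i).not.1 (lt_irrefl _))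
  have hmd : m < d := hmi.trans_lt i.2
  rw [sE, dif_pos hmd]
  exact le_antisymm (monotone_sortedEigs hM hmi)
    (not_lt.1 fun h => lt_irrefl m ((hlt ⟨m, hmd⟩).1 h))

lemma sigNeg_shiftedForm_of_simple (hM : M.IsHermitian) {m : ℕ} (hm : m < d)
    (hsimple : Module.finrank ℝ (Module.End.eigenspace (Matrix.toLin' M) (sE M m)) = 1) :
    sigNeg (shiftedForm M (sE M m)) = m := by
  have hval : sE M m = sortedEigs M ⟨m, hm⟩ := dif_pos hm
  have hset : {j | sortedEigs M j = sE M m} = {⟨m, hm⟩} := by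
    rw [finrank_eigenspace_toLin' hM, ← ncard_sortedEigs hM (· = sE M m)] at hsimple
    obtain ⟨k, hk⟩ := Set.ncard_eq_one.1 hsimple
    have : (⟨m, hm⟩ : Fin d) ∈ ({k} : Set (Fin d)) := hk ▸ hval.symm
    rw [hk, Set.mem_singleton_iff.1 this]
  have hlt : {j | sortedEigs M j < sE M m} = Set.Iio ⟨m, hm⟩ := by
    ext j
    have hne : sortedEigs M j = sE M m ↔ j = ⟨m, hm⟩ := Set.ext_iff.1 hset j
    refine ⟨fun h => (monotone_sortedEigs hM).reflect_lt (hval ▸ h), fun h => ?_⟩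
    exact lt_of_le_of_ne (hval ▸ monotone_sortedEigs hM (le_of_lt h)) (hne.not.2 (ne_of_lt h))
  rw [sigNeg_shiftedForm hM, ← ncard_sortedEigs hM (· < sE M m), hlt]
  simp [Set.ncard_eq_toFinset_card']

lemma eventually_sE_eq {X : Type*} [TopologicalSpace X]
    {A : X → Matrix (Fin d) (Fin d) ℝ} {μ : X → ℝ} {x₀ : X} (hA : ContinuousAt A x₀)
    (hμ : ContinuousAt μ x₀) (hherm : ∀ x, (A x).IsHermitian)
    (heig : ∀ᶠ x in 𝓝 x₀, Module.End.HasEigenvalue (Matrix.toLin' (A x)) (μ x))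
    (hsimple : Module.finrank ℝ (Module.End.eigenspace (Matrix.toLin' (A x₀)) (μ x₀)) = 1) :
    ∀ᶠ x in 𝓝 x₀, sE (A x) (sigNeg (shiftedForm (A x₀) (μ x₀))) = μ x := by
  have hcont : ContinuousAt (fun x => A x - μ x • (1 : Matrix (Fin d) (Fin d) ℝ)) x₀ :=
    hA.sub (hμ.smul continuousAt_const)
  filter_upwards [heig, eventually_sigPos_toQuadraticForm'_le hcont,
    eventually_sigNeg_toQuadraticForm'_le hcont] with x hx hpos hneg
  have hdim := sigPos_add_sigNeg_shiftedForm (hherm x) (μ x)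
  have hdim₀ := sigPos_add_sigNeg_shiftedForm (hherm x₀) (μ x₀)
  have hone : 1 ≤ Module.finrank ℝ (Module.End.eigenspace (Matrix.toLin' (A x)) (μ x)) :=
    Submodule.one_le_finrank_iff.2 hx
  change sigPos (shiftedForm _ _) ≤ sigPos (shiftedForm _ _) at hpos
  change sigNeg (shiftedForm _ _) ≤ sigNeg (shiftedForm _ _) at hneg
  rw [show sigNeg (shiftedForm (A x₀) (μ x₀)) = sigNeg (shiftedForm (A x) (μ x)) by omega]
  exact sE_sigNeg_shiftedForm (hherm x) hx

end SortedEigenvalues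

section EigenBranch

open scoped ContDiff

variable {n E : Type*} [Fintype n] [NormedAddCommGroup E] [NormedSpace ℝ E]

/-- The partial derivative in `(x, μ)`, at an eigenpair `(f, c)` of `M`, of the system
`(M x - μ x, ⟨f, x⟩)` that determines a normalised eigenpair. -/
def eigenpairLinearization (M : Matrix n n ℝ) (c : ℝ) (f : n → ℝ) :
    (n → ℝ) × ℝ →ₗ[ℝ] (n → ℝ) × ℝ :=
  ((M.mulVecLin - c • LinearMap.id).coprod (-LinearMap.toSpanSingleton ℝ (n → ℝ) f)).prod
    (dotProductBilin ℝ ℝ f ∘ₗ LinearMap.fst ℝ (n → ℝ) ℝ)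

lemma eigenpairLinearization_apply (M : Matrix n n ℝ) (c : ℝ) (f : n → ℝ) (p : (n → ℝ) × ℝ) :
    eigenpairLinearization M c f p = (M *ᵥ p.1 - c • p.1 - p.2 • f, f ⬝ᵥ p.1) := by
  simp [eigenpairLinearization, sub_eq_add_neg]

lemma hasFDerivAt_eigenpairEquation (M : Matrix n n ℝ) (c : ℝ) (f : n → ℝ) :
    HasFDerivAt (fun p : (n → ℝ) × ℝ => (M *ᵥ p.1 - p.2 • p.1, f ⬝ᵥ p.1))
      (LinearMap.toContinuousLinearMap (eigenpairLinearization M c f)) (f, c) := by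
  have hmul : HasFDerivAt (fun p : (n → ℝ) × ℝ => M *ᵥ p.1) _ (f, c) :=
    (LinearMap.toContinuousLinearMap (M.mulVecLin ∘ₗ LinearMap.fst ℝ (n → ℝ) ℝ)).hasFDerivAt
  have hdot : HasFDerivAt (fun p : (n → ℝ) × ℝ => f ⬝ᵥ p.1) _ (f, c) :=
    (LinearMap.toContinuousLinearMap
      (dotProductBilin ℝ ℝ f ∘ₗ LinearMap.fst ℝ (n → ℝ) ℝ)).hasFDerivAt
  have hsmul : HasFDerivAt (fun p : (n → ℝ) × ℝ => p.2 • p.1) _ (f, c) :=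
    (hasFDerivAt_snd (𝕜 := ℝ) (p := (f, c))).fun_smul (hasFDerivAt_fst (𝕜 := ℝ) (p := (f, c)))
  refine ((hmul.sub hsmul).prodMk hdot).congr_fderiv (ContinuousLinearMap.ext fun p => ?_)
  simp [eigenpairLinearization_apply, sub_sub]

variable [DecidableEq n]

lemma eigenpairLinearization_injective {M : Matrix n n ℝ} (hM : M.IsHermitian) {c : ℝ} {f : n → ℝ}
    (hf : M *ᵥ f = c • f) (hf0 : f ≠ 0)
    (hsimple : Module.finrank ℝ (Module.End.eigenspace (Matrix.toLin' M) c) = 1) :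
    Function.Injective (eigenpairLinearization M c f) := by
  rw [injective_iff_map_eq_zero]
  rintro ⟨y, m⟩ h
  rw [eigenpairLinearization_apply, Prod.mk_eq_zero] at h
  obtain ⟨heq, horth⟩ := h
  have hff : f ⬝ᵥ f ≠ 0 := dotProduct_self_eq_zero.not.2 hf0
  have hm : m = 0 := by
    have hpair := congrArg (f ⬝ᵥ ·) heq
    simp only [dotProduct_sub, dotProduct_smul, dotProduct_mulVec_comm hM f y, hf, dotProduct_zero,
      dotProduct_comm y f, horth, sub_self, zero_sub, neg_eq_zero, smul_eq_mul] at hpair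
    exact (mul_eq_zero.1 hpair).resolve_right hff
  obtain ⟨a, ha⟩ : ∃ a : ℝ, a • f = y := by
    have hfmem : f ∈ Module.End.eigenspace (Matrix.toLin' M) c :=
      Module.End.mem_eigenspace_iff.2 (by rwa [toLin'_apply])
    have hymem : y ∈ Module.End.eigenspace (Matrix.toLin' M) c := by
      rw [Module.End.mem_eigenspace_iff, toLin'_apply]
      simpa [hm, sub_eq_zero] using heq
    obtain ⟨a, ha⟩ := exists_smul_eq_of_finrank_eq_one hsimple
      (x := ⟨f, hfmem⟩) (by simpa using hf0) ⟨y, hymem⟩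
    exact ⟨a, congrArg Subtype.val ha⟩
  have ha0 : a = 0 := by
    rw [← ha, dotProduct_smul, smul_eq_mul] at horth
    exact (mul_eq_zero.1 horth).resolve_right hff
  rw [← ha, ha0, hm, zero_smul, Prod.mk_zero_zero]

lemma exists_contDiffAt_eigenpair [CompleteSpace E] {A : E → Matrix n n ℝ} {γ₀ : E} {m : ℕ∞ω}
    (hm : m ≠ 0) (hA : ∀ i j, ContDiffAt ℝ m (fun γ => A γ i j) γ₀) (hherm : (A γ₀).IsHermitian)
    {f : n → ℝ} {c : ℝ} (hf : A γ₀ *ᵥ f = c • f) (hf0 : f ≠ 0)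
    (hsimple : Module.finrank ℝ (Module.End.eigenspace (Matrix.toLin' (A γ₀)) c) = 1) :
    ∃ (x : E → n → ℝ) (μ : E → ℝ), ContDiffAt ℝ m x γ₀ ∧ ContDiffAt ℝ m μ γ₀ ∧
      x γ₀ = f ∧ μ γ₀ = c ∧ ∀ᶠ γ in 𝓝 γ₀, A γ *ᵥ x γ = μ γ • x γ := by
  let F : E × ((n → ℝ) × ℝ) → (n → ℝ) × ℝ :=
    fun p => (A p.1 *ᵥ p.2.1 - p.2.2 • p.2.1, f ⬝ᵥ p.2.1)
  have hF : ContDiffAt ℝ m F (γ₀, f, c) := by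
    have hmulVec : ContDiffAt ℝ m (fun p : E × ((n → ℝ) × ℝ) => A p.1 *ᵥ p.2.1) (γ₀, f, c) := by
      refine contDiffAt_pi.2 fun i => ContDiffAt.sum fun j _ => ContDiffAt.mul ?_ (by fun_prop)
      exact (hA i j).comp (g := fun γ => A γ i j) (γ₀, f, c) contDiffAt_fst
    have hdot : ContDiffAt ℝ m (fun p : E × ((n → ℝ) × ℝ) => f ⬝ᵥ p.2.1) (γ₀, f, c) :=
      ContDiffAt.sum fun j _ => by fun_prop
    exact (hmulVec.sub (by fun_prop)).prodMk hdot
  have hpartial : fderiv ℝ F (γ₀, f, c) ∘L .inr ℝ E ((n → ℝ) × ℝ) =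
      LinearMap.toContinuousLinearMap (eigenpairLinearization (A γ₀) c f) :=
    HasFDerivAt.unique
      ((hF.differentiableAt hm).hasFDerivAt.comp (f, c) (hasFDerivAt_prodMk_right γ₀ (f, c)))
      (hasFDerivAt_eigenpairEquation (A γ₀) c f)
  have hinv : (fderiv ℝ F (γ₀, f, c) ∘L .inr ℝ E ((n → ℝ) × ℝ)).IsInvertible := by
    rw [hpartial]
    exact ⟨(LinearEquiv.ofInjectiveEndo _
      (eigenpairLinearization_injective hherm hf hf0 hsimple)).toContinuousLinearEquiv, rfl⟩
  have hψ := hF.contDiffAt_implicitFunction hm hinv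
  have hψ₀ := hF.implicitFunction_apply_self hm hinv
  refine ⟨fun γ => (hF.implicitFunction hm hinv γ).1, fun γ => (hF.implicitFunction hm hinv γ).2,
    hψ.fst, hψ.snd, congrArg Prod.fst hψ₀, congrArg Prod.snd hψ₀, ?_⟩
  filter_upwards [hF.eventually_apply_implicitFunction hm hinv] with γ hγ
  have hzero := congrArg Prod.fst hγ
  simp only [F, hf, sub_self] at hzero
  exact sub_eq_zero.1 hzero

omit [DecidableEq n] in
lemma fderiv_eigenpairEquation {A : E → Matrix n n ℝ} {x : E → n → ℝ} {μ : E → ℝ} {γ : E}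
    {A' : (n → ℝ) → (n → ℝ) → E →L[ℝ] ℝ} {x' : E →L[ℝ] n → ℝ} {μ' : E →L[ℝ] ℝ}
    (hA : ∀ z y, HasFDerivAt (fun δ => z ⬝ᵥ A δ *ᵥ y) (A' z y) γ) (hx : HasFDerivAt x x' γ)
    (hμ : HasFDerivAt μ μ' γ) (heig : ∀ᶠ δ in 𝓝 γ, A δ *ᵥ x δ = μ δ • x δ) (z : n → ℝ) (t : E) :
    A' z (x γ) t + z ⬝ᵥ A γ *ᵥ x' t = μ' t * (z ⬝ᵥ x γ) + μ γ * (z ⬝ᵥ x' t) := by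
  classical
  have hexpand (B : Matrix n n ℝ) (y : n → ℝ) :
      z ⬝ᵥ B *ᵥ y = ∑ b, y b * (z ⬝ᵥ B *ᵥ Pi.single b 1) := by
    simp only [dotProduct_mulVec, dotProduct_single_one]
    exact dotProduct_comm _ _
  have hx_apply (b : n) := hasFDerivAt_pi'.1 hx b
  have hfixed : A' z (x γ) = ∑ b, x γ b • A' z (Pi.single b 1) := by
    refine (hA z (x γ)).unique ?_
    simp only [hexpand _ (x γ)]
    exact HasFDerivAt.fun_sum fun b _ => (hA z (Pi.single b 1)).const_mul (x γ b)
  have hleft : HasFDerivAt (fun δ => z ⬝ᵥ A δ *ᵥ x δ)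
      (∑ b, (x γ b • A' z (Pi.single b 1) +
        (z ⬝ᵥ A γ *ᵥ Pi.single b 1) • (ContinuousLinearMap.proj b ∘L x'))) γ := by
    simp only [hexpand _ (x _)]
    exact HasFDerivAt.fun_sum fun b _ => (hx_apply b).mul (hA z (Pi.single b 1))
  have hdot : HasFDerivAt (fun δ => z ⬝ᵥ x δ) (∑ b, z b • (ContinuousLinearMap.proj b ∘L x')) γ :=
    HasFDerivAt.fun_sum fun b _ => (hx_apply b).const_mul (z b)
  have hright : HasFDerivAt (fun δ => z ⬝ᵥ A δ *ᵥ x δ) _ γ :=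
    (hμ.mul hdot).congr_of_eventuallyEq (heig.mono fun δ hδ => by simp [hδ])
  have heq := congr($(hleft.unique hright) t)
  simp only [Finset.sum_add_distrib, ← hfixed, _root_.add_apply, _root_.smul_apply,
    _root_.sum_apply, ContinuousLinearMap.comp_apply, ContinuousLinearMap.proj_apply,
    smul_eq_mul] at heq
  rw [hexpand (A γ) (x' t)]
  simp only [mul_comm (x' t _)]
  rw [heq, add_comm, mul_comm (μ' t)]
  rfl

end EigenBranch

section TreePattern

variable {V : Type*} [Fintype V]

/-- The coupling `M a b * f a * f b` across the edge `s(a, b)`, for a symmetric matrix `M`. An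
arbitrary orientation of the edge is chosen; by symmetry it does not matter. -/
noncomputable def coupling (M : Matrix V V ℝ) (f : V → ℝ) (e : Sym2 V) : ℝ :=
  M e.out.1 e.out.2 * (f e.out.1 * f e.out.2)

/-- The increment of `y` along the edge `e`, in an arbitrarily chosen orientation; only its square
and its vanishing are meaningful. -/
noncomputable def edgeDiff (y : V → ℝ) (e : Sym2 V) : ℝ := y e.out.1 - y e.out.2

omit [Fintype V] in
lemma sym2_out_mk (a b : V) : Quot.out s(a, b) = (a, b) ∨ Quot.out s(a, b) = (b, a) := by
  have hout : s((Quot.out s(a, b)).1, (Quot.out s(a, b)).2) = s(a, b) := Quot.out_eq _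
  simpa only [Sym2.eq_iff, Prod.ext_iff] using hout

omit [Fintype V] in
lemma coupling_mk {M : Matrix V V ℝ} (hM : M.IsHermitian) (f : V → ℝ) (a b : V) :
    coupling M f s(a, b) = M a b * (f a * f b) := by
  have hsymm : M b a = M a b := by simpa using hM.apply a b
  rcases sym2_out_mk a b with h | h <;> rw [coupling, h]
  rw [hsymm, mul_comm (f a)]

omit [Fintype V] in
lemma edgeDiff_mk_sq (y : V → ℝ) (a b : V) : edgeDiff y s(a, b) ^ 2 = (y a - y b) ^ 2 := by
  rcases sym2_out_mk a b with h | h <;> rw [edgeDiff, h]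
  ring

lemma sum_sum_adj_eq_two_mul_sum_edgeFinset (G : SimpleGraph V) [DecidableRel G.Adj]
    (F : Sym2 V → ℝ) :
    (∑ a, ∑ b, if G.Adj a b then F s(a, b) else 0) = 2 * ∑ e ∈ G.edgeFinset, F e := by
  classical
  have hfilter : G.edgeFinset = Finset.univ.filter (· ∈ G.edgeSet) := by ext; simp
  rw [← Fintype.sum_prod_type', ← Finset.sum_fiberwise _ fun p : V × V => s(p.1, p.2), hfilter,
    Finset.sum_filter, Finset.mul_sum]
  refine Finset.sum_congr rfl fun e _ => ?_
  induction e with | h a b => ?_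
  have hfiber : (Finset.univ.filter fun p : V × V => s(p.1, p.2) = s(a, b)) = {(a, b), (b, a)} := by
    ext ⟨x, y⟩
    simp
  by_cases hab : G.Adj a b
  · rw [hfiber, Finset.sum_pair (by simp [hab.ne])]
    simp [hab, hab.symm, Sym2.eq_swap (a := b), two_mul]
  · rw [hfiber, Finset.sum_eq_zero, if_neg (by simpa using hab), mul_zero]
    simp [hab, G.adj_comm b a]

variable [DecidableEq V] {M : Matrix V V ℝ} {f : V → ℝ} {c : ℝ}

lemma shiftedForm_groundState (hM : M.IsHermitian) (hf : M *ᵥ f = c • f) (y : V → ℝ) :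
    shiftedForm M c (f * y) = -(1 / 2) * ∑ a, ∑ b, M a b * (f a * f b) * (y a - y b) ^ 2 := by
  have hsymm (a b : V) : M a b = M b a := by simpa using hM.apply b a
  have hrow (a : V) : ∑ b, M a b * f b = c * f a := congrFun hf a
  have hleft : ∑ a, ∑ b, M a b * (f a * f b) * y a ^ 2 = c * ((f * y) ⬝ᵥ (f * y)) := by
    calc _ = ∑ a, (f a * y a ^ 2) * ∑ b, M a b * f b := by
          simp only [Finset.mul_sum]
          exact Finset.sum_congr rfl fun a _ => Finset.sum_congr rfl fun b _ => by ring
      _ = _ := by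
          simp only [hrow, dotProduct, Finset.mul_sum, Pi.mul_apply]
          exact Finset.sum_congr rfl fun a _ => by ring
  have hright : ∑ a, ∑ b, M a b * (f a * f b) * y b ^ 2 = c * ((f * y) ⬝ᵥ (f * y)) := by
    rw [Finset.sum_comm, ← hleft]
    exact Finset.sum_congr rfl fun a _ => Finset.sum_congr rfl fun b _ => by rw [hsymm b a]; ring
  have hcross : (f * y) ⬝ᵥ M *ᵥ (f * y) = ∑ a, ∑ b, M a b * (f a * f b) * (y a * y b) := by
    simp only [dotProduct, mulVec, Finset.mul_sum, Pi.mul_apply]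
    exact Finset.sum_congr rfl fun a _ => Finset.sum_congr rfl fun b _ => by ring
  have hsq : ∑ a, ∑ b, M a b * (f a * f b) * (y a - y b) ^ 2 =
      ∑ a, ∑ b, M a b * (f a * f b) * y a ^ 2 + ∑ a, ∑ b, M a b * (f a * f b) * y b ^ 2 -
        2 * ∑ a, ∑ b, M a b * (f a * f b) * (y a * y b) := by
    simp only [Finset.mul_sum, ← Finset.sum_add_distrib, ← Finset.sum_sub_distrib]
    exact Finset.sum_congr rfl fun a _ => Finset.sum_congr rfl fun b _ => by ring
  rw [shiftedForm_apply, hsq, hleft, hright, hcross]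
  ring

variable {T : SimpleGraph V}

lemma shiftedForm_mul_eq_sum_edgeFinset [DecidableRel T.Adj] (hM : M.IsHermitian)
    (hsupp : ∀ a b, a ≠ b → ¬T.Adj a b → M a b = 0) (hf : M *ᵥ f = c • f) (y : V → ℝ) :
    shiftedForm M c (f * y) = ∑ e ∈ T.edgeFinset, -coupling M f e * edgeDiff y e ^ 2 := by
  have hterm (a b : V) : M a b * (f a * f b) * (y a - y b) ^ 2 =
      if T.Adj a b then coupling M f s(a, b) * edgeDiff y s(a, b) ^ 2 else 0 := by
    split_ifs with hab
    · rw [coupling_mk hM, edgeDiff_mk_sq]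
    · rcases eq_or_ne a b with rfl | hne
      · simp
      · simp [hsupp a b hne hab]
  simp only [shiftedForm_groundState hM hf, hterm, neg_mul, Finset.sum_neg_distrib]
  rw [sum_sum_adj_eq_two_mul_sum_edgeFinset T fun e => coupling M f e * edgeDiff y e ^ 2]
  ring

/-- The value of `x / f` at the root `r` together with its increments along the edges of `T`. -/
noncomputable def rootedGradient (T : SimpleGraph V) (f : V → ℝ) (r : V) :
    (V → ℝ) →ₗ[ℝ] Option T.edgeSet → ℝ :=
  LinearMap.pi fun o => o.elim ((f r)⁻¹ • LinearMap.proj r) fun e =>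
    (f e.1.out.1)⁻¹ • LinearMap.proj e.1.out.1 - (f e.1.out.2)⁻¹ • LinearMap.proj e.1.out.2

omit [Fintype V] [DecidableEq V] in
lemma rootedGradient_some (r : V) (x : V → ℝ) (e : T.edgeSet) :
    rootedGradient T f r x (some e) = edgeDiff (f⁻¹ * x) e := rfl

omit [Fintype V] [DecidableEq V] in
lemma rootedGradient_injective (hT : T.Preconnected) (hf0 : ∀ a, f a ≠ 0) (r : V) :
    Function.Injective (rootedGradient T f r) := by
  rw [injective_iff_map_eq_zero]
  intro x hx
  have hroot : (f⁻¹ * x) r = 0 := congrFun hx none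
  have hadj {a b : V} (hab : T.Adj a b) : (f⁻¹ * x) a = (f⁻¹ * x) b := by
    have hdiff : edgeDiff (f⁻¹ * x) s(a, b) = 0 := congrFun hx (some ⟨s(a, b), hab⟩)
    refine sub_eq_zero.1 (pow_eq_zero_iff two_ne_zero |>.1 ?_)
    rw [← edgeDiff_mk_sq, hdiff, zero_pow two_ne_zero]
  have hconst {a b : V} (walk : T.Walk a b) : (f⁻¹ * x) a = (f⁻¹ * x) b := by
    induction walk with
    | nil => rfl
    | cons hab _ ih => exact (hadj hab).trans ih
  ext a
  obtain ⟨walk⟩ := hT a r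
  exact (mul_eq_zero.1 ((hconst walk).trans hroot)).resolve_left (inv_ne_zero (hf0 a))

lemma shiftedForm_equivalent_edgeSquares [DecidableRel T.Adj] (hT : T.IsTree) (hM : M.IsHermitian)
    (hsupp : ∀ a b, a ≠ b → ¬T.Adj a b → M a b = 0) (hf : M *ᵥ f = c • f) (hf0 : ∀ a, f a ≠ 0) :
    (shiftedForm M c).Equivalent
      (weightedSumSquares ℝ fun o : Option T.edgeSet => o.elim 0 fun e => -coupling M f e) := by
  obtain ⟨r⟩ := hT.connected.nonempty
  refine equivalent_of_injective (rootedGradient T f r)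
    (rootedGradient_injective hT.connected.preconnected hf0 r) ?_ fun x => ?_
  · rw [Module.finrank_fintype_fun_eq_card, Module.finrank_fintype_fun_eq_card, Fintype.card_option,
      ← SimpleGraph.edgeFinset_card, hT.card_edgeFinset]
  · have hx : f * (f⁻¹ * x) = x := funext fun a => mul_inv_cancel_left₀ (hf0 a) _
    conv_rhs => rw [← hx, shiftedForm_mul_eq_sum_edgeFinset hM hsupp hf,
      Finset.sum_subtype T.edgeFinset (fun _ => SimpleGraph.mem_edgeFinset)]
    simp only [weightedSumSquares_apply, Fintype.sum_option, Option.elim_none, zero_mul, zero_add,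
      Option.elim_some, rootedGradient_some, smul_eq_mul, ← pow_two]

lemma sigNeg_shiftedForm_of_isTree (hT : T.IsTree) (hM : M.IsHermitian)
    (hsupp : ∀ a b, a ≠ b → ¬T.Adj a b → M a b = 0) (hf : M *ᵥ f = c • f) (hf0 : ∀ a, f a ≠ 0) :
    sigNeg (shiftedForm M c) = {e ∈ T.edgeSet | 0 < coupling M f e}.ncard := by
  classical
  rw [QuadraticForm.sigNeg_of_equiv_weightedSumSquares
    (shiftedForm_equivalent_edgeSquares hT hM hsupp hf hf0)]
  have hset : {o : Option T.edgeSet | (o.elim 0 fun e => -coupling M f e) < 0} =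
      some '' {e : T.edgeSet | 0 < coupling M f e} := by
    ext (_ | e) <;> simp
  rw [hset, Set.ncard_image_of_injective _ (Option.some_injective _),
    ← Set.ncard_image_of_injective _ Subtype.val_injective]
  congr 1
  ext e
  simp [and_comm]

lemma finrank_eigenspace_of_isTree (hT : T.IsTree) (hM : M.IsHermitian)
    (hsupp : ∀ a b, a ≠ b → ¬T.Adj a b → M a b = 0) (hadj : ∀ a b, T.Adj a b → M a b ≠ 0)
    (hf : M *ᵥ f = c • f) (hf0 : ∀ a, f a ≠ 0) :
    Module.finrank ℝ (Module.End.eigenspace (Matrix.toLin' M) c) = 1 := by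
  classical
  have hcoupling (e : T.edgeSet) : coupling M f e ≠ 0 := by
    obtain ⟨e, he⟩ := e
    induction e with | h a b => ?_
    rw [coupling_mk hM]
    exact mul_ne_zero (hadj a b he) (mul_ne_zero (hf0 a) (hf0 b))
  rw [← radical_shiftedForm hM, QuadraticForm.finrank_radical_of_equiv_weightedSumSquares
    (shiftedForm_equivalent_edgeSquares hT hM hsupp hf hf0), Set.ncard_eq_one]
  refine ⟨none, ?_⟩
  ext (_ | e) <;> simp [hcoupling]

end TreePattern

section SmoothEigenvalue

open scoped ContDiff

variable {E : Type*} [NormedAddCommGroup E] [NormedSpace ℝ E]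

lemma exists_contDiffAt_eigenvector_sE [CompleteSpace E] {d : ℕ}
    {A : E → Matrix (Fin d) (Fin d) ℝ} {γ₀ : E} {m : ℕ∞ω} (hm : m ≠ 0)
    (hA : ∀ i j, ContDiffAt ℝ m (fun γ => A γ i j) γ₀) (hherm : ∀ γ, (A γ).IsHermitian)
    {f : Fin d → ℝ} {c : ℝ} (hf : A γ₀ *ᵥ f = c • f) (hf0 : f ≠ 0)
    (hsimple : Module.finrank ℝ (Module.End.eigenspace (Matrix.toLin' (A γ₀)) c) = 1) :
    ∃ x : E → Fin d → ℝ, ContDiffAt ℝ m x γ₀ ∧ x γ₀ = f ∧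
      ContDiffAt ℝ m (fun γ => sE (A γ) (sigNeg (shiftedForm (A γ₀) c))) γ₀ ∧
      ∀ᶠ γ in 𝓝 γ₀, A γ *ᵥ x γ = sE (A γ) (sigNeg (shiftedForm (A γ₀) c)) • x γ := by
  obtain ⟨x, μ, hx, hμ, hx₀, rfl, heig⟩ :=
    exists_contDiffAt_eigenpair hm hA (hherm γ₀) hf hf0 hsimple
  have hAcont : ContinuousAt A γ₀ :=
    continuousAt_pi.2 fun i => continuousAt_pi.2 fun j => (hA i j).continuousAt
  have hx_ne : ∀ᶠ γ in 𝓝 γ₀, x γ ≠ 0 := hx.continuousAt.eventually_ne (by rwa [hx₀])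
  have hvalue : ∀ᶠ γ in 𝓝 γ₀, Module.End.HasEigenvalue (Matrix.toLin' (A γ)) (μ γ) := by
    filter_upwards [heig, hx_ne] with γ hγ hne
    exact Module.End.hasEigenvalue_of_hasEigenvector
      ⟨Module.End.mem_eigenspace_iff.2 (by rwa [toLin'_apply]), hne⟩
  have hsE := eventually_sE_eq hAcont hμ.continuousAt hherm hvalue hsimple
  refine ⟨x, hx, hx₀, hμ.congr_of_eventuallyEq hsE, ?_⟩
  filter_upwards [heig, hsE] with γ hγ hsEγ
  rw [hsEγ, hγ]

end SmoothEigenvalue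

section Hessian

variable {k : ℕ} {F : (Fin k → ℝ) → ℝ} {x₀ : Fin k → ℝ}

lemma hessMat_apply (hF : ContDiffAt ℝ 2 F x₀) (i j : Fin k) :
    hessMat F x₀ i j = fderiv ℝ (fderiv ℝ F) x₀ (Pi.single i 1) (Pi.single j 1) := by
  have hdiff : DifferentiableAt ℝ (fderiv ℝ F) x₀ :=
    (hF.fderiv_right (m := 1) (by norm_num)).differentiableAt one_ne_zero
  simp [hessMat, fderiv_clm_apply hdiff (differentiableAt_const _)]

lemma isHermitian_hessMat (hF : ContDiffAt ℝ 2 F x₀) : (hessMat F x₀).IsHermitian := by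
  ext i j
  simp only [conjTranspose_apply, star_trivial, hessMat_apply hF]
  exact hF.isSymmSndFDerivAt (by simp) _ _

lemma dotProduct_hessMat_mulVec (hF : ContDiffAt ℝ 2 F x₀) (t : Fin k → ℝ) :
    t ⬝ᵥ hessMat F x₀ *ᵥ t = fderiv ℝ (fderiv ℝ F) x₀ t t := by
  conv_rhs => rw [pi_eq_sum_univ' t]
  simp only [map_sum, map_smul, _root_.sum_apply, _root_.smul_apply, dotProduct, mulVec,
    hessMat_apply hF, Finset.mul_sum, smul_eq_mul]
  rw [Finset.sum_comm]
  exact Finset.sum_congr rfl fun j _ => Finset.sum_congr rfl fun i _ => by ring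

lemma negEigCount_eq_sigNeg {M : Matrix (Fin k) (Fin k) ℝ} (hM : M.IsHermitian) :
    negEigCount M = sigNeg M.toQuadraticForm' := by
  have hform : shiftedForm M 0 = M.toQuadraticForm' := by simp [shiftedForm]
  rw [← hform, sigNeg_shiftedForm hM, ← ncard_sortedEigs hM (· < 0), negEigCount]

end Hessian

section CutOperator

variable {N β : ℕ} {G : SimpleGraph (Fin N)} [DecidableRel G.Adj] {q : Fin N → ℝ}
  {u v : Fin β → Fin N}

lemma isHermitian_schrodOp : (schrodOp G q).IsHermitian :=
  (isHermitian_diagonal q).sub (G.isHermitian_adjMatrix ℝ)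

lemma isHermitian_schrodCut (γ : Fin β → ℝ) : (schrodCut G q u v γ).IsHermitian := by
  refine isHermitian_schrodOp.sub ?_
  rw [IsHermitian, conjTranspose_eq_transpose_of_trivial, transpose_sum]
  refine Finset.sum_congr rfl fun j _ => ?_
  ext a b
  simp only [transpose_apply, of_apply, and_comm, or_comm]

lemma contDiffAt_schrodCut_apply {m : WithTop ℕ∞} {γ : Fin β → ℝ} (hγ : ∀ j, γ j ≠ 0)
    (a b : Fin N) : ContDiffAt ℝ m (fun δ => schrodCut G q u v δ a b) γ := by
  simp only [schrodCut, Matrix.sub_apply, Matrix.sum_apply, of_apply]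
  refine contDiffAt_const.sub (ContDiffAt.sum fun j _ => ?_)
  split_ifs
  · fun_prop
  · exact ContDiffAt.inv (by fun_prop) (hγ j)
  · exact contDiffAt_const
  · exact contDiffAt_const

/-- The graph `Γ` with the edges `s(u j, v j)` removed. -/
def cutGraph (G : SimpleGraph (Fin N)) (u v : Fin β → Fin N) : SimpleGraph (Fin N) :=
  G.deleteEdges {e | ∃ j, e = s(u j, v j)}

lemma schrodCut_apply_of_ne (hadj : ∀ j, G.Adj (u j) (v j))
    (hinj : Function.Injective fun j => s(u j, v j)) (γ : Fin β → ℝ) {a b : Fin N} (hab : a ≠ b)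
    [Decidable ((cutGraph G u v).Adj a b)] :
    schrodCut G q u v γ a b = if (cutGraph G u v).Adj a b then -1 else 0 := by
  have hentry : schrodCut G q u v γ a b = (∑ j, if s(a, b) = s(u j, v j) then 1 else 0) -
      if G.Adj a b then 1 else 0 := by
    simp only [schrodCut, schrodOp, Matrix.sub_apply, Matrix.sum_apply, of_apply,
      diagonal_apply_ne q hab, SimpleGraph.adjMatrix_apply]
    rw [zero_sub, sub_eq_add_neg, ← Finset.sum_neg_distrib, neg_add_eq_sub]
    congr 1
    refine Finset.sum_congr rfl fun j _ => ?_
    rw [if_neg fun h => hab (h.1.trans h.2.symm), if_neg fun h => hab (h.1.trans h.2.symm)]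
    simp only [Sym2.eq_iff]
    split_ifs <;> simp
  rw [hentry]
  by_cases hcut : ∃ j, s(a, b) = s(u j, v j)
  · obtain ⟨j, hj⟩ := hcut
    have hG : G.Adj a b := by
      rw [← SimpleGraph.mem_edgeSet, hj]
      exact hadj j
    have hone (i : Fin β) : s(a, b) = s(u i, v i) ↔ i = j :=
      ⟨fun hi => hinj (hi.symm.trans hj), fun hi => hi ▸ hj⟩
    simp [-Sym2.eq, hone, hG, cutGraph, SimpleGraph.deleteEdges_adj]
  · have hnone : ∀ j, s(a, b) ≠ s(u j, v j) := not_exists.1 hcut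
    simp only [hnone, cutGraph, SimpleGraph.deleteEdges_adj, if_false, Finset.sum_const_zero,
      Set.mem_ofPred_eq, exists_false, not_false_iff, and_true]
    split_ifs <;> simp

lemma forall_eq_mk_mul_neg_iff {V : Type*} (f : V → ℝ) (x y : V) :
    (∀ a b, s(x, y) = s(a, b) → f a * f b < 0) ↔ f x * f y < 0 := by
  refine ⟨fun h => h _ _ rfl, fun h a b hab => ?_⟩
  rcases Sym2.eq_iff.1 hab with ⟨rfl, rfl⟩ | ⟨rfl, rfl⟩
  exacts [h, mul_comm (f x) _ ▸ h]

omit [DecidableRel G.Adj] in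
lemma signChanges_eq_add {f : Fin N → ℝ} (hadj : ∀ j, G.Adj (u j) (v j))
    (hinj : Function.Injective fun j => s(u j, v j)) :
    signChanges G f = signChanges (cutGraph G u v) f +
      {j | f (v j) / f (u j) < 0}.ncard := by
  have hratio (j : Fin β) : f (v j) / f (u j) < 0 ↔ f (u j) * f (v j) < 0 := by
    rw [mul_neg_iff, div_neg_iff]
    tauto
  rw [← Set.ncard_image_of_injective _ hinj, signChanges, signChanges, ← Set.ncard_union_eq]
  · congr 1
    ext e
    by_cases hcut : ∃ j, e = s(u j, v j)
    · obtain ⟨j, rfl⟩ := hcut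
      have himage : s(u j, v j) ∈ (fun j => s(u j, v j)) '' {j | f (v j) / f (u j) < 0} ↔
          f (u j) * f (v j) < 0 := hinj.mem_set_image.trans (hratio j)
      have hcutEdge : s(u j, v j) ∉ (cutGraph G u v).edgeSet := by
        rw [cutGraph, SimpleGraph.edgeSet_deleteEdges]
        exact fun h => h.2 ⟨j, rfl⟩
      rw [Set.mem_union, himage]
      simp only [Set.mem_ofPred_eq, forall_eq_mk_mul_neg_iff, hcutEdge, false_and, false_or,
        and_iff_right_iff_imp]
      exact fun _ => hadj j
    · have hkept : e ∉ (fun j => s(u j, v j)) '' {j | f (v j) / f (u j) < 0} := by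
        rintro ⟨j, -, rfl⟩
        exact hcut ⟨j, rfl⟩
      simp only [Set.mem_union, hkept, or_false, Set.mem_ofPred_eq, cutGraph,
        SimpleGraph.edgeSet_deleteEdges, Set.mem_sdiff, hcut, not_false_iff, and_true]
  · rw [Set.disjoint_right]
    rintro e ⟨j, -, rfl⟩ ⟨he, -⟩
    rw [cutGraph, SimpleGraph.edgeSet_deleteEdges] at he
    exact he.2 ⟨j, rfl⟩

section EigenvectorSigns

variable {f : Fin N → ℝ} {c : ℝ}

lemma sigNeg_shiftedForm_schrodCut (hadj : ∀ j, G.Adj (u j) (v j))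
    (hinj : Function.Injective fun j => s(u j, v j)) (htree : (cutGraph G u v).IsTree)
    {γ : Fin β → ℝ} (hf : schrodCut G q u v γ *ᵥ f = c • f) (hf0 : ∀ a, f a ≠ 0) :
    sigNeg (shiftedForm (schrodCut G q u v γ) c) = signChanges (cutGraph G u v) f := by
  classical
  have hsupp (a b : Fin N) (hab : a ≠ b) (hna : ¬(cutGraph G u v).Adj a b) :
      schrodCut G q u v γ a b = 0 := by
    rw [schrodCut_apply_of_ne hadj hinj γ hab, if_neg hna]
  rw [sigNeg_shiftedForm_of_isTree htree (isHermitian_schrodCut γ) hsupp hf hf0, signChanges]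
  congr 1
  ext e
  induction e with | h a b => ?_
  refine and_congr_right fun (hab : (cutGraph G u v).Adj a b) => ?_
  rw [coupling_mk (isHermitian_schrodCut γ), schrodCut_apply_of_ne hadj hinj γ hab.ne, if_pos hab,
    forall_eq_mk_mul_neg_iff, neg_one_mul, neg_pos]

lemma finrank_eigenspace_schrodCut (hadj : ∀ j, G.Adj (u j) (v j))
    (hinj : Function.Injective fun j => s(u j, v j)) (htree : (cutGraph G u v).IsTree)
    {γ : Fin β → ℝ} (hf : schrodCut G q u v γ *ᵥ f = c • f) (hf0 : ∀ a, f a ≠ 0) :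
    Module.finrank ℝ (Module.End.eigenspace (Matrix.toLin' (schrodCut G q u v γ)) c) = 1 := by
  classical
  refine finrank_eigenspace_of_isTree htree (isHermitian_schrodCut γ) (fun a b hab hna => ?_)
    (fun a b hab => ?_) hf hf0
  · rw [schrodCut_apply_of_ne hadj hinj γ hab, if_neg hna]
  · rw [schrodCut_apply_of_ne hadj hinj γ hab.ne, if_pos hab]
    exact neg_ne_zero.2 one_ne_zero

end EigenvectorSigns

end CutOperator

section CompletingSquares

lemma prod_equivalent_prod_weightedSumSquares {K V T ι : Type*} [Field K] [NeZero (2 : K)]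
    [AddCommGroup V] [Module K V] [AddCommGroup T] [Module K T] [Fintype ι]
    {P R : QuadraticForm K V} {Q : QuadraticForm K T} (w : ι → K) (b : V →ₗ[K] ι → K)
    (Y : T →ₗ[K] V) (τ : T ≃ₗ[K] (ι → K)) (hP : ∀ y, P y = R y - ∑ j, w j * b y j ^ 2)
    (hY : ∀ y t, polar P y (Y t) = 2 * ∑ j, w j * τ t j * b y j)
    (hQ : ∀ t, Q t = -∑ j, w j * τ t j * (b (Y t) j + τ t j)) :
    (P.prod Q).Equivalent (R.prod (weightedSumSquares K (-w))) := by
  refine ⟨{ toFun := fun p => (p.1 + Y p.2, τ p.2 + b (p.1 + Y p.2))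
            invFun := fun s => (s.1 - Y (τ.symm (s.2 - b s.1)), τ.symm (s.2 - b s.1))
            map_add' := fun p p' => by ext <;> simp <;> abel
            map_smul' := fun a p => by ext <;> simp
            left_inv := fun p => by simp
            right_inv := fun s => by simp
            map_app' := fun ⟨y, t⟩ => ?_ }⟩
  have hPY : P (Y t) = ∑ j, w j * τ t j * b (Y t) j :=
    mul_left_cancel₀ two_ne_zero <| by rw [← hY, polar_self, two_smul, two_mul]
  have hR : R (y + Y t) = P y + P (Y t) + polar P y (Y t) + ∑ j, w j * b (y + Y t) j ^ 2 := by
    rw [← sub_eq_iff_eq_add, ← hP, polar]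
    ring
  simp only [QuadraticMap.prod_apply, weightedSumSquares_apply, hR, hPY, hY, hQ, Finset.mul_sum,
    add_assoc, ← Finset.sum_neg_distrib, ← Finset.sum_add_distrib]
  congr 1
  refine Finset.sum_congr rfl fun j _ => ?_
  simp only [Pi.add_apply, Pi.neg_apply, smul_eq_mul, map_add]
  ring

end CompletingSquares

section CutFamily

variable {N β : ℕ} {G : SimpleGraph (Fin N)} [DecidableRel G.Adj] {q : Fin N → ℝ}
  {u v : Fin β → Fin N}

/-- The amounts `γ j * x (u j) - x (v j)` by which `x` fails the matching conditions
`x (v j) = γ j * x (u j)` at the cuts; up to the weights `(γ j)⁻¹` their squares make up the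
difference between the quadratic forms of `H(Γ)` and `H(Γ^cut_γ)`. -/
def matchingDefect (u v : Fin β → Fin N) (γ : Fin β → ℝ) : (Fin N → ℝ) →ₗ[ℝ] Fin β → ℝ :=
  LinearMap.pi fun j => γ j • LinearMap.proj (u j) - LinearMap.proj (v j)

lemma matchingDefect_apply (γ : Fin β → ℝ) (x : Fin N → ℝ) (j : Fin β) :
    matchingDefect u v γ x j = γ j * x (u j) - x (v j) := rfl

lemma matchingDefect_eq_zero_iff {γ : Fin β → ℝ} {x : Fin N → ℝ} :
    matchingDefect u v γ x = 0 ↔ ∀ j, x (v j) = γ j * x (u j) := by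
  simp only [funext_iff, matchingDefect_apply, Pi.zero_apply, sub_eq_zero, eq_comm]

lemma dotProduct_schrodCut_mulVec (huv : ∀ j, u j ≠ v j) (γ : Fin β → ℝ) (z x : Fin N → ℝ) :
    z ⬝ᵥ schrodCut G q u v γ *ᵥ x = z ⬝ᵥ schrodOp G q *ᵥ x -
      ∑ j, (γ j * (z (u j) * x (u j)) + (γ j)⁻¹ * (z (v j) * x (v j)) -
        z (u j) * x (v j) - z (v j) * x (u j)) := by
  have hsingle (j : Fin β) :
      (Matrix.of fun a b : Fin N =>
        if a = u j ∧ b = u j then γ j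
        else if a = v j ∧ b = v j then (γ j)⁻¹
        else if (a = u j ∧ b = v j) ∨ (a = v j ∧ b = u j) then -1
        else 0) =
      Matrix.single (u j) (u j) (γ j) + Matrix.single (v j) (v j) (γ j)⁻¹ -
        Matrix.single (u j) (v j) 1 - Matrix.single (v j) (u j) 1 := by
    ext a b
    have := huv j
    simp only [of_apply, Matrix.sub_apply, Matrix.add_apply, single_apply]
    grind
  simp only [schrodCut, hsingle, sub_mulVec, add_mulVec, sum_mulVec, dotProduct_sub,
    dotProduct_add, dotProduct_sum, single_mulVec_eq, dotProduct_smul, dotProduct_single,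
    smul_eq_mul, one_mul, mul_one]
  congr 1
  exact Finset.sum_congr rfl fun j _ => by ring

lemma dotProduct_schrodCut_mulVec_eq_sub_sum_matchingDefect (huv : ∀ j, u j ≠ v j)
    {γ : Fin β → ℝ} (hγ : ∀ j, γ j ≠ 0) (z x : Fin N → ℝ) :
    z ⬝ᵥ schrodCut G q u v γ *ᵥ x = z ⬝ᵥ schrodOp G q *ᵥ x -
      ∑ j, (γ j)⁻¹ * matchingDefect u v γ z j * matchingDefect u v γ x j := by
  rw [dotProduct_schrodCut_mulVec huv]
  congr 1
  refine Finset.sum_congr rfl fun j _ => ?_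
  have := hγ j
  simp only [matchingDefect_apply]
  field_simp
  ring

lemma schrodCut_mulVec_of_matchingDefect_eq_zero (huv : ∀ j, u j ≠ v j) {γ : Fin β → ℝ}
    (hγ : ∀ j, γ j ≠ 0) {f : Fin N → ℝ} (hf : matchingDefect u v γ f = 0) :
    schrodCut G q u v γ *ᵥ f = schrodOp G q *ᵥ f :=
  dotProduct_eq _ _ fun z => by
    rw [dotProduct_comm, dotProduct_comm _ z,
      dotProduct_schrodCut_mulVec_eq_sub_sum_matchingDefect huv hγ, hf]
    simp

lemma shiftedForm_schrodCut (huv : ∀ j, u j ≠ v j) {γ : Fin β → ℝ} (hγ : ∀ j, γ j ≠ 0) (c : ℝ)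
    (y : Fin N → ℝ) : shiftedForm (schrodCut G q u v γ) c y =
      shiftedForm (schrodOp G q) c y - ∑ j, (γ j)⁻¹ * matchingDefect u v γ y j ^ 2 := by
  simp only [shiftedForm_apply, dotProduct_schrodCut_mulVec_eq_sub_sum_matchingDefect huv hγ,
    pow_two, mul_assoc]
  ring

/-- The derivative at `γ` of `γ ↦ ⟨z, H(Γ^cut_γ) y⟩`, for entries of `γ` different from `0`. -/
noncomputable def cutVariation (u v : Fin β → Fin N) (γ : Fin β → ℝ) (z y : Fin N → ℝ) :
    (Fin β → ℝ) →L[ℝ] ℝ :=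
  -∑ j, (z (u j) * y (u j) - (γ j ^ 2)⁻¹ * (z (v j) * y (v j))) • ContinuousLinearMap.proj j

lemma cutVariation_apply (γ : Fin β → ℝ) (z y : Fin N → ℝ) (t : Fin β → ℝ) :
    cutVariation u v γ z y t =
      -∑ j, t j * (z (u j) * y (u j) - (γ j ^ 2)⁻¹ * (z (v j) * y (v j))) := by
  simp [cutVariation, mul_comm]

lemma cutVariation_apply_of_matchingDefect_eq_zero {γ : Fin β → ℝ} (hγ : ∀ j, γ j ≠ 0)
    {f : Fin N → ℝ} (hf : matchingDefect u v γ f = 0) (z : Fin N → ℝ) (t : Fin β → ℝ) :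
    cutVariation u v γ z f t = -∑ j, (γ j)⁻¹ * (t j * f (u j)) * matchingDefect u v γ z j := by
  rw [cutVariation_apply]
  congr 1
  refine Finset.sum_congr rfl fun j _ => ?_
  have := hγ j
  rw [matchingDefect_eq_zero_iff.1 hf j, matchingDefect_apply]
  field_simp

lemma hasFDerivAt_dotProduct_schrodCut_mulVec (huv : ∀ j, u j ≠ v j) {γ : Fin β → ℝ}
    (hγ : ∀ j, γ j ≠ 0) (z y : Fin N → ℝ) :
    HasFDerivAt (fun δ => z ⬝ᵥ schrodCut G q u v δ *ᵥ y) (cutVariation u v γ z y) γ := by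
  simp only [dotProduct_schrodCut_mulVec huv]
  have hterm (j : Fin β) : HasFDerivAt (fun δ : Fin β → ℝ =>
      δ j * (z (u j) * y (u j)) + (δ j)⁻¹ * (z (v j) * y (v j)) -
        z (u j) * y (v j) - z (v j) * y (u j))
      ((z (u j) * y (u j) - (γ j ^ 2)⁻¹ * (z (v j) * y (v j))) •
        ContinuousLinearMap.proj (R := ℝ) (φ := fun _ : Fin β => ℝ) j) γ := by
    have hcoord := hasFDerivAt_apply (𝕜 := ℝ) j γ
    have hinv := (hasDerivAt_inv (hγ j)).comp_hasFDerivAt γ hcoord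
    refine ((((hcoord.mul_const _).add (hinv.mul_const _)).sub_const _).sub_const _).congr_fderiv ?_
    rw [smul_smul, ← add_smul]
    congr 1
    ring
  exact ((HasFDerivAt.fun_sum fun j _ => hterm j).const_sub _)

lemma hasFDerivAt_cutVariation_self {g : Fin β → ℝ} (hg : ∀ j, g j ≠ 0)
    {x : (Fin β → ℝ) → Fin N → ℝ} {x' : (Fin β → ℝ) →L[ℝ] Fin N → ℝ} (hx : HasFDerivAt x x' g)
    (hmatch : matchingDefect u v g (x g) = 0) (t : Fin β → ℝ) :
    HasFDerivAt (fun γ => cutVariation u v γ (x γ) (x γ) t)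
      (-∑ j, (2 * (g j)⁻¹ * (t j * x g (u j))) • (.proj j ∘L
        (LinearMap.toContinuousLinearMap (matchingDefect u v g) ∘L x') +
          x g (u j) • .proj j)) g := by
  simp only [cutVariation_apply]
  refine (HasFDerivAt.fun_sum fun j _ => ?_).neg
  have hcoord (a : Fin N) := hasFDerivAt_pi'.1 hx a
  have hγsq := (hasFDerivAt_apply (𝕜 := ℝ) j g).pow 2
  have hinv := (hasDerivAt_inv (pow_ne_zero 2 (hg j))).comp_hasFDerivAt g hγsq
  refine (((hcoord (u j)).mul (hcoord (u j))).sub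
    (hinv.mul ((hcoord (v j)).mul (hcoord (v j))))).const_mul (t j) |>.congr_fderiv ?_
  ext s
  have hgj := hg j
  simp only [Function.comp_apply, matchingDefect_eq_zero_iff.1 hmatch j, smul_add, Pi.mul_apply,
    Nat.add_one_sub_one, pow_one, nsmul_eq_mul, Nat.cast_ofNat, neg_smul, smul_neg,
    _root_.smul_apply, _root_.sub_apply, _root_.add_apply, ContinuousLinearMap.comp_apply,
    ContinuousLinearMap.proj_apply, smul_eq_mul, _root_.neg_apply,
    LinearMap.coe_toContinuousLinearMap', matchingDefect_apply]
  field_simp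
  ring

lemma eventually_forall_apply_ne_zero {g : Fin β → ℝ} (hg : ∀ j, g j ≠ 0) :
    ∀ᶠ γ in 𝓝 g, ∀ j, γ j ≠ 0 :=
  eventually_all.2 fun j => (continuous_apply j).continuousAt.eventually_ne (hg j)

section Branch

variable {g : Fin β → ℝ} {x : (Fin β → ℝ) → Fin N → ℝ} {μ : (Fin β → ℝ) → ℝ}

lemma fderiv_eigenvalue_mul_dotProduct_self (huv : ∀ j, u j ≠ v j) {γ : Fin β → ℝ}
    (hγ : ∀ j, γ j ≠ 0) (hx : DifferentiableAt ℝ x γ) (hμ : DifferentiableAt ℝ μ γ)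
    (heig : ∀ᶠ δ in 𝓝 γ, schrodCut G q u v δ *ᵥ x δ = μ δ • x δ) (t : Fin β → ℝ) :
    fderiv ℝ μ γ t * (x γ ⬝ᵥ x γ) = cutVariation u v γ (x γ) (x γ) t := by
  have h := fderiv_eigenpairEquation (hasFDerivAt_dotProduct_schrodCut_mulVec huv hγ)
    hx.hasFDerivAt hμ.hasFDerivAt heig (x γ) t
  rw [dotProduct_mulVec_comm (isHermitian_schrodCut γ), heig.self_of_nhds, dotProduct_smul,
    smul_eq_mul, dotProduct_comm _ (x γ)] at h
  exact (add_right_cancel h).symm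

lemma fderiv_eigenvalue_eq_zero (huv : ∀ j, u j ≠ v j) (hg : ∀ j, g j ≠ 0)
    (hx : DifferentiableAt ℝ x g) (hμ : DifferentiableAt ℝ μ g)
    (heig : ∀ᶠ δ in 𝓝 g, schrodCut G q u v δ *ᵥ x δ = μ δ • x δ) (hx0 : x g ≠ 0)
    (hmatch : matchingDefect u v g (x g) = 0) : fderiv ℝ μ g = 0 := by
  ext t
  have h := fderiv_eigenvalue_mul_dotProduct_self huv hg hx hμ heig t
  rw [cutVariation_apply_of_matchingDefect_eq_zero hg hmatch, hmatch] at h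
  simpa [dotProduct_self_eq_zero, hx0] using h

lemma polar_shiftedForm_schrodCut_fderiv (huv : ∀ j, u j ≠ v j) (hg : ∀ j, g j ≠ 0)
    (hx : DifferentiableAt ℝ x g) (hμ : DifferentiableAt ℝ μ g)
    (heig : ∀ᶠ δ in 𝓝 g, schrodCut G q u v δ *ᵥ x δ = μ δ • x δ) (hx0 : x g ≠ 0)
    (hmatch : matchingDefect u v g (x g) = 0) (z : Fin N → ℝ) (t : Fin β → ℝ) :
    polar (shiftedForm (schrodCut G q u v g) (μ g)) z (fderiv ℝ x g t) =
      2 * ∑ j, (g j)⁻¹ * (t j * x g (u j)) * matchingDefect u v g z j := by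
  have h := fderiv_eigenpairEquation (hasFDerivAt_dotProduct_schrodCut_mulVec huv hg)
    hx.hasFDerivAt hμ.hasFDerivAt heig z t
  rw [fderiv_eigenvalue_eq_zero huv hg hx hμ heig hx0 hmatch,
    cutVariation_apply_of_matchingDefect_eq_zero hg hmatch, _root_.zero_apply, zero_mul] at h
  rw [polar_shiftedForm (isHermitian_schrodCut g)]
  linarith

lemma fderiv_fderiv_eigenvalue_mul_dotProduct_self (huv : ∀ j, u j ≠ v j) (hg : ∀ j, g j ≠ 0)
    (hx : ContDiffAt ℝ 2 x g) (hμ : ContDiffAt ℝ 2 μ g)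
    (heig : ∀ᶠ δ in 𝓝 g, schrodCut G q u v δ *ᵥ x δ = μ δ • x δ) (hx0 : x g ≠ 0)
    (hmatch : matchingDefect u v g (x g) = 0) (t : Fin β → ℝ) :
    fderiv ℝ (fderiv ℝ μ) g t t * (x g ⬝ᵥ x g) =
      -2 * ∑ j, (g j)⁻¹ * (t j * x g (u j)) *
        (matchingDefect u v g (fderiv ℝ x g t) j + t j * x g (u j)) := by
  have hx1 := hx.differentiableAt two_ne_zero
  have hμ1 := hμ.differentiableAt two_ne_zero
  have hgradient : (fun γ => fderiv ℝ μ γ t * (x γ ⬝ᵥ x γ)) =ᶠ[𝓝 g]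
      fun γ => cutVariation u v γ (x γ) (x γ) t := by
    filter_upwards [eventually_forall_apply_ne_zero hg, hx.eventually (by simp),
      hμ.eventually (by simp), heig.eventually_nhds] with γ hγ hxγ hμγ heigγ
    exact fderiv_eigenvalue_mul_dotProduct_self huv hγ (hxγ.differentiableAt two_ne_zero)
      (hμγ.differentiableAt two_ne_zero) heigγ t
  have hright := (hasFDerivAt_cutVariation_self hg hx1.hasFDerivAt hmatch t).congr_of_eventuallyEq
    hgradient
  have hDμ : DifferentiableAt ℝ (fderiv ℝ μ) g :=
    (hμ.fderiv_right (m := 1) (by norm_num)).differentiableAt one_ne_zero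
  have hnorm : DifferentiableAt ℝ (fun γ => x γ ⬝ᵥ x γ) g := by
    simp only [dotProduct]
    fun_prop
  have hleft := (hDμ.hasFDerivAt.clm_apply (hasFDerivAt_const t g)).mul hnorm.hasFDerivAt
  have h := congr($(hleft.unique hright) t)
  simp only [fderiv_eigenvalue_eq_zero huv hg hx1 hμ1 heig hx0 hmatch, _root_.zero_apply, zero_smul,
    ContinuousLinearMap.comp_zero, zero_add, _root_.smul_apply, ContinuousLinearMap.flip_apply,
    smul_eq_mul, _root_.neg_apply, _root_.sum_apply, _root_.add_apply,
    ContinuousLinearMap.comp_apply, LinearMap.coe_toContinuousLinearMap',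
    ContinuousLinearMap.proj_apply] at h
  rw [mul_comm, h, neg_mul, Finset.mul_sum]
  exact congrArg Neg.neg (Finset.sum_congr rfl fun j _ => by ring)

lemma shiftedForm_schrodCut_prod_hessMat_equivalent (huv : ∀ j, u j ≠ v j) (hg : ∀ j, g j ≠ 0)
    (hx : ContDiffAt ℝ 2 x g) (hμ : ContDiffAt ℝ 2 μ g)
    (heig : ∀ᶠ δ in 𝓝 g, schrodCut G q u v δ *ᵥ x δ = μ δ • x δ) (hx0 : x g ≠ 0)
    (hxu : ∀ j, x g (u j) ≠ 0) (hmatch : matchingDefect u v g (x g) = 0) :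
    ((shiftedForm (schrodCut G q u v g) (μ g)).prod
      (((x g ⬝ᵥ x g) / 2) • (hessMat μ g).toQuadraticForm')).Equivalent
      ((shiftedForm (schrodOp G q) (μ g)).prod (weightedSumSquares ℝ (-fun j => (g j)⁻¹))) := by
  refine prod_equivalent_prod_weightedSumSquares (fun j => (g j)⁻¹) (matchingDefect u v g)
    (fderiv ℝ x g) (.piCongrRight fun j => .smulOfNeZero ℝ ℝ (x g (u j)) (hxu j))
    (shiftedForm_schrodCut huv hg (μ g)) (fun y t => ?_) fun t => ?_
  · simpa [mul_comm] using polar_shiftedForm_schrodCut_fderiv huv hg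
      (hx.differentiableAt two_ne_zero) (hμ.differentiableAt two_ne_zero) heig hx0 hmatch y t
  · have hsecond := fderiv_fderiv_eigenvalue_mul_dotProduct_self huv hg hx hμ heig hx0 hmatch t
    simp only [LinearEquiv.piCongrRight_apply, LinearEquiv.smulOfNeZero_apply,
      ContinuousLinearMap.coe_coe, _root_.smul_apply, smul_eq_mul, mul_comm (x g (u _)),
      toQuadraticForm'_apply, dotProduct_hessMat_mulVec hμ]
    linarith

lemma sigNeg_shiftedForm_schrodCut_add_negEigCount (huv : ∀ j, u j ≠ v j) (hg : ∀ j, g j ≠ 0)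
    (hx : ContDiffAt ℝ 2 x g) (hμ : ContDiffAt ℝ 2 μ g)
    (heig : ∀ᶠ δ in 𝓝 g, schrodCut G q u v δ *ᵥ x δ = μ δ • x δ) (hx0 : x g ≠ 0)
    (hxu : ∀ j, x g (u j) ≠ 0) (hmatch : matchingDefect u v g (x g) = 0) :
    sigNeg (shiftedForm (schrodCut G q u v g) (μ g)) + negEigCount (hessMat μ g) =
      sigNeg (shiftedForm (schrodOp G q) (μ g)) + {j | 0 < g j}.ncard := by
  have hpos : 0 < (x g ⬝ᵥ x g) / 2 := half_pos (by simpa using dotProduct_self_star_pos_iff.2 hx0)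
  have hweights : {j | (-fun j => (g j)⁻¹) j < 0} = {j | 0 < g j} := by simp
  rw [negEigCount_eq_sigNeg (isHermitian_hessMat hμ),
    ← sigNeg_smul_of_pos (hessMat μ g).toQuadraticForm' hpos, ← sigNeg_prod,
    (shiftedForm_schrodCut_prod_hessMat_equivalent huv hg hx hμ heig hx0 hxu hmatch).sigNeg_eq,
    sigNeg_prod, QuadraticForm.sigNeg_weightedSumSquares, hweights]

end Branch

lemma morse_index_sE_schrodCut {f : Fin N → ℝ} {g : Fin β → ℝ} {c : ℝ}
    (hadj : ∀ j, G.Adj (u j) (v j)) (hinj : Function.Injective fun j => s(u j, v j))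
    (htree : (cutGraph G u v).IsTree) (hg : ∀ j, g j ≠ 0) (hmatch : matchingDefect u v g f = 0)
    (hf : schrodOp G q *ᵥ f = c • f) (hf0 : ∀ a, f a ≠ 0) :
    fderiv ℝ (fun γ => sE (schrodCut G q u v γ) (signChanges (cutGraph G u v) f)) g = 0 ∧
      signChanges (cutGraph G u v) f + negEigCount
          (hessMat (fun γ => sE (schrodCut G q u v γ) (signChanges (cutGraph G u v) f)) g) =
        sigNeg (shiftedForm (schrodOp G q) c) + {j | 0 < g j}.ncard := by
  have huv (j : Fin β) : u j ≠ v j := (hadj j).ne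
  have hcut : schrodCut G q u v g *ᵥ f = c • f :=
    (schrodCut_mulVec_of_matchingDefect_eq_zero huv hg hmatch).trans hf
  have hfne : f ≠ 0 := fun h => hf0 htree.connected.nonempty.some (congrFun h _)
  have hindex := sigNeg_shiftedForm_schrodCut hadj hinj htree hcut hf0
  obtain ⟨x, hx, rfl, hμ, heig⟩ := exists_contDiffAt_eigenvector_sE two_ne_zero
    (contDiffAt_schrodCut_apply hg) isHermitian_schrodCut hcut hfne
    (finrank_eigenspace_schrodCut hadj hinj htree hcut hf0)
  rw [hindex] at hμ heig
  have hc : sE (schrodCut G q u v g) (signChanges (cutGraph G u v) (x g)) = c :=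
    smul_left_injective ℝ hfne (heig.self_of_nhds.symm.trans hcut)
  refine ⟨fderiv_eigenvalue_eq_zero huv hg (hx.differentiableAt two_ne_zero)
    (hμ.differentiableAt two_ne_zero) heig hfne hmatch, ?_⟩
  simpa only [hc, hindex] using
    sigNeg_shiftedForm_schrodCut_add_negEigCount huv hg hx hμ heig hfne (fun j => hf0 _) hmatch

end CutFamily

lemma ncard_setOf_pos_add_ncard_setOf_neg {ι α : Type*} [Fintype ι] [LinearOrder α] [Zero α]
    {g : ι → α} (hg : ∀ j, g j ≠ 0) :
    {j | 0 < g j}.ncard + {j | g j < 0}.ncard = Fintype.card ι := by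
  have hcompl : {j | g j < 0} = {j | 0 < g j}ᶜ :=
    Set.ext fun j => (lt_iff_le_and_ne.trans (and_iff_left (hg j))).trans not_lt.symm
  rw [hcompl, Set.ncard_add_ncard_compl, Nat.card_eq_fintype_card]

/-- `γ̃ = (f_{v_j}/f_{u_j})_j` is a critical point of
`γ ↦ λ_{φ-p+1}(H(Γ^cut_γ))`, and its Morse index equals `n - 1 + β - φ` (stated additively as
`index + φ = (n-1) + β` to avoid truncated `ℕ`-subtraction). -/
theorem cut_eigenvalue_morse_index {N β : ℕ} (G : SimpleGraph (Fin N))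
    [DecidableRel G.Adj] (hconn : G.Connected) (q : Fin N → ℝ)
    (uE vE : Fin β → Fin N)
    (hadj : ∀ j, G.Adj (uE j) (vE j))
    (hdistinct : ∀ i j, s(uE i, vE i) = s(uE j, vE j) → i = j)
    (htree : (G.deleteEdges {e | ∃ j, e = s(uE j, vE j)}).IsTree)
    (hβ : β + N = G.edgeFinset.card + 1)
    (n : ℕ) (hn1 : 1 ≤ n) (hn2 : n ≤ N)
    (f : Fin N → ℝ)
    (heig : (schrodOp G q).mulVec f = sE (schrodOp G q) (n - 1) • f)
    (hsimple : Module.finrank ℝ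
      (Module.End.eigenspace (Matrix.toLin' (schrodOp G q)) (sE (schrodOp G q) (n - 1))) = 1)
    (hf0 : ∀ v, f v ≠ 0)
    (φ p : ℕ) (hφ : φ = signChanges G f)
    (hp : p = {j : Fin β | f (vE j) / f (uE j) < 0}.ncard)
    (lamCut : (Fin β → ℝ) → ℝ)
    (hlamCut : lamCut = fun γ => sE (schrodCut G q uE vE γ) (φ - p)) :
    fderiv ℝ lamCut (fun j => f (vE j) / f (uE j)) = 0 ∧
    negEigCount (hessMat lamCut (fun j => f (vE j) / f (uE j))) + φ = (n - 1) + β := by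
  have hg (j : Fin β) : f (vE j) / f (uE j) ≠ 0 := div_ne_zero (hf0 _) (hf0 _)
  have hmatch : matchingDefect uE vE (fun j => f (vE j) / f (uE j)) f = 0 :=
    matchingDefect_eq_zero_iff.2 fun j => (div_mul_cancel₀ _ (hf0 _)).symm
  obtain ⟨hcrit, hcount⟩ := morse_index_sE_schrodCut hadj hdistinct htree hg hmatch heig hf0
  have hφp : φ = signChanges (cutGraph G uE vE) f + p := by
    rw [hφ, hp, signChanges_eq_add hadj hdistinct]
  have hn : sigNeg (shiftedForm (schrodOp G q) (sE (schrodOp G q) (n - 1))) = n - 1 :=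
    sigNeg_shiftedForm_of_simple isHermitian_schrodOp (by omega) hsimple
  have hβp := ncard_setOf_pos_add_ncard_setOf_neg hg
  rw [Fintype.card_fin, ← hp] at hβp
  rw [hlamCut, show φ - p = signChanges (cutGraph G uE vE) f by omega]
  exact ⟨hcrit, by omega⟩
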